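/- Assume M̄ ≥ 2D. Let s ∈ T and suppose condition (D) holds at every index k ∈ {s−1, s, s+1, s+2, s+3}. Then τ(s) := inf{m > s : m ∈ T} satisfies τ(s) ≤ s + 3; that is, among the three indices s+1, s+2, s+3 at least one belongs to T. -/

import Mathlib

/-!
Let `ε = h_s`, so that `h_{s-1} = -ε` and the estimate satisfies `ε (y_{s-1} - x_{s-1}) ≥ 0`. If
neither `s + 1` nor `s + 2` belongs to `T`, the four steps from `s - 1` to `s + 3` have signs
`-ε, ε, ε, ε` and sizes `M_{s-1}`, `M_s`, `M_s`, `a M_s`, hence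
`ε (y_{s+3} - y_{s-1}) = ((2 + a) M_s - M_{s-1}) δ`. Since `s ∈ T` forces `M_{s-1} ≤ a M_s` and
`M̄ ≤ M_s`, the estimate moves by at least `2 M̄ δ` in the direction `ε`, while the signal moves
by at most `4 D δ ≤ 2 M̄ δ` over the same time. So the estimate has met or passed the signal at
`s + 3`, and the sign flips there: a tie also flips it.
-/

noncomputable section

/-- Membership in the set `T = {k ≥ 1 : h_{k-1} h_k < 0}` of sign-change indices. -/
def Tmem (h : ℤ → ℝ) (k : ℕ) : Prop := 1 ≤ k ∧ h ((k : ℤ) - 1) * h (k : ℤ) < 0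

/-- The modified adaptive delta modulation system: sequences `h_k` (binary symbols,
indexed by `ℤ` so that `h (-1) = 1` makes sense), `y_k` (estimates at sample points)
and `M_k` (step sizes), driven by the sampled signal `x (k δ)`. -/
structure ADM (δ a Mbar M₀ y₀ : ℝ) (x : ℝ → ℝ) where
  h : ℤ → ℝ
  y : ℕ → ℝ
  M : ℕ → ℝ
  h_init : h (-1) = 1
  h_lt : ∀ k : ℕ, y k < x (k * δ) → h (k : ℤ) = 1
  h_gt : ∀ k : ℕ, x (k * δ) < y k → h (k : ℤ) = -1
  h_eq : ∀ k : ℕ, y k = x (k * δ) → h (k : ℤ) = - h ((k : ℤ) - 1)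
  y_zero : y 0 = y₀
  y_rec : ∀ k : ℕ, y (k + 1) = y k + h (k : ℤ) * M k * δ
  M_zero : M 0 = M₀
  M_pos : ∀ k : ℕ, 0 < M k
  M_rec_T : ∀ k : ℕ, Tmem h k → M k = max (a⁻¹ * M (k - 1)) Mbar
  M_rec_prev : ∀ k : ℕ, 1 ≤ k → ¬ Tmem h k → Tmem h (k - 1) → M k = M (k - 1)
  M_rec_grow : ∀ k : ℕ, 1 ≤ k → ¬ Tmem h k → ¬ Tmem h (k - 1) → M k = a * M (k - 1)

/-- Condition (D) at index `k`: `sup_{t ∈ [t_k, t_{k+1}]} |x(t) − x(t_k)| ≤ D δ`. -/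
def condD (δ D : ℝ) (x : ℝ → ℝ) (k : ℕ) : Prop :=
  ∀ t ∈ Set.Icc ((k : ℝ) * δ) (((k : ℝ) + 1) * δ), |x t - x ((k : ℝ) * δ)| ≤ D * δ

lemma condD.abs_sub_le {δ D : ℝ} {x : ℝ → ℝ} (hδ : 0 ≤ δ) {m n : ℕ} (hmn : m ≤ n)
    (hx : ∀ k, m ≤ k → k < n → condD δ D x k) :
    |x (n * δ) - x (m * δ)| ≤ (n - m : ℕ) * (D * δ) := by
  have step : ∀ {k : ℕ}, m ≤ k → k < n →
      dist (x (k * δ)) (x ((k + 1 : ℕ) * δ)) ≤ D * δ := by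
    intro k hmk hkn
    rw [dist_comm, Real.dist_eq, Nat.cast_succ]
    exact hx k hmk hkn _ ⟨by gcongr; linarith, le_rfl⟩
  rw [← Real.dist_eq, dist_comm]
  simpa using dist_le_Ico_sum_of_dist_le (f := fun k : ℕ => x (k * δ)) hmn step

namespace ADM

variable {δ a Mbar M₀ y₀ : ℝ} {x : ℝ → ℝ} (S : ADM δ a Mbar M₀ y₀ x)

lemma h_succ_of_y_succ_eq {k : ℕ} (hk : S.y (k + 1) = x ((k + 1 : ℕ) * δ)) :
    S.h (k + 1 : ℕ) = -S.h k := by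
  simpa using S.h_eq (k + 1) hk

lemma h_eq_one_or_neg_one (k : ℕ) : S.h k = 1 ∨ S.h k = -1 := by
  induction k with
  | zero =>
    rcases lt_trichotomy (S.y 0) (x ((0 : ℕ) * δ)) with hlt | heq | hgt
    · exact .inl (S.h_lt 0 hlt)
    · exact .inr (by simpa [S.h_init] using S.h_eq 0 heq)
    · exact .inr (S.h_gt 0 hgt)
  | succ k ih =>
    rcases lt_trichotomy (S.y (k + 1)) (x ((k + 1 : ℕ) * δ)) with hlt | heq | hgt
    · exact .inl (S.h_lt _ hlt)
    · rw [S.h_succ_of_y_succ_eq heq, neg_inj, neg_eq_iff_eq_neg]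
      exact ih.symm
    · exact .inr (S.h_gt _ hgt)

lemma h_mul_self (k : ℕ) : S.h k * S.h k = 1 :=
  mul_self_eq_one_iff.2 (S.h_eq_one_or_neg_one k)

lemma abs_h (k : ℕ) : |S.h k| = 1 :=
  (abs_eq zero_le_one).2 (S.h_eq_one_or_neg_one k)

lemma h_mul_y_sub_nonpos (k : ℕ) : S.h k * (S.y k - x (k * δ)) ≤ 0 := by
  rcases lt_trichotomy (S.y k) (x (k * δ)) with hlt | heq | hgt
  · rw [S.h_lt k hlt]; linarith
  · rw [heq, sub_self, mul_zero]
  · rw [S.h_gt k hgt]; linarith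

lemma tmem_succ_iff (k : ℕ) : Tmem S.h (k + 1) ↔ S.h (k + 1 : ℕ) = -S.h k := by
  have hcast : ((k + 1 : ℕ) : ℤ) - 1 = k := by simp
  rw [Tmem, hcast]
  rcases S.h_eq_one_or_neg_one k with hk | hk <;>
    rcases S.h_eq_one_or_neg_one (k + 1) with hk' | hk' <;>
    rw [hk, hk'] <;> norm_num

lemma h_succ_of_not_tmem {k : ℕ} (hk : ¬ Tmem S.h (k + 1)) : S.h (k + 1 : ℕ) = S.h k := by
  have hsq : S.h (k + 1 : ℕ) * S.h (k + 1 : ℕ) = S.h k * S.h k := by simp only [h_mul_self]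
  exact (mul_self_eq_mul_self_iff.1 hsq).resolve_right (mt (S.tmem_succ_iff k).2 hk)

lemma tmem_succ_of_h_mul_y_sub_nonneg {k : ℕ}
    (hk : 0 ≤ S.h k * (S.y (k + 1) - x ((k + 1 : ℕ) * δ))) : Tmem S.h (k + 1) := by
  by_contra hT
  have hsign := S.h_succ_of_not_tmem hT
  have hle := S.h_mul_y_sub_nonpos (k + 1)
  rw [hsign] at hle
  have hne : S.h k ≠ 0 := left_ne_zero_of_mul_eq_one (S.h_mul_self k)
  have htie : S.y (k + 1) - x ((k + 1 : ℕ) * δ) = 0 :=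
    (mul_eq_zero.1 (le_antisymm hle hk)).resolve_left hne
  exact hT ((S.tmem_succ_iff k).2 (S.h_succ_of_y_succ_eq (sub_eq_zero.1 htie)))

lemma le_M_of_tmem {k : ℕ} (hk : Tmem S.h k) : Mbar ≤ S.M k :=
  S.M_rec_T k hk ▸ le_max_right _ _

lemma M_le_mul_M_succ_of_tmem (ha : 0 < a) {k : ℕ} (hk : Tmem S.h (k + 1)) :
    S.M k ≤ a * S.M (k + 1) :=
  (inv_mul_le_iff₀ ha).1 (S.M_rec_T (k + 1) hk ▸ le_max_left _ _)

lemma y_add_four_of_tmem_of_not_tmem {k : ℕ} (h₁ : Tmem S.h (k + 1))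
    (h₂ : ¬ Tmem S.h (k + 2)) (h₃ : ¬ Tmem S.h (k + 3)) :
    S.y (k + 4) = S.y k + S.h (k + 1 : ℕ) * ((2 + a) * S.M (k + 1) - S.M k) * δ := by
  have hh₀ : S.h k = -S.h (k + 1 : ℕ) := by rw [(S.tmem_succ_iff k).1 h₁, neg_neg]
  have hh₂ : S.h (k + 2 : ℕ) = S.h (k + 1 : ℕ) := S.h_succ_of_not_tmem h₂
  have hh₃ : S.h (k + 3 : ℕ) = S.h (k + 2 : ℕ) := S.h_succ_of_not_tmem h₃
  have hM₂ : S.M (k + 2) = S.M (k + 1) := S.M_rec_prev (k + 2) (by omega) h₂ h₁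
  have hM₃ : S.M (k + 3) = a * S.M (k + 2) := S.M_rec_grow (k + 3) (by omega) h₃ h₂
  rw [S.y_rec (k + 3), S.y_rec (k + 2), S.y_rec (k + 1), S.y_rec k, hM₃, hM₂, hh₃, hh₂, hh₀]
  ring

lemma two_mul_Mbar_mul_le_h_mul_y_sub (hδ : 0 ≤ δ) (ha : 0 < a) {k : ℕ}
    (h₁ : Tmem S.h (k + 1)) (h₂ : ¬ Tmem S.h (k + 2)) (h₃ : ¬ Tmem S.h (k + 3)) :
    2 * Mbar * δ ≤ S.h (k + 1 : ℕ) * (S.y (k + 4) - S.y k) := by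
  have hbar := S.le_M_of_tmem h₁
  have hprev := S.M_le_mul_M_succ_of_tmem ha h₁
  calc
    2 * Mbar * δ ≤ ((2 + a) * S.M (k + 1) - S.M k) * δ := by gcongr; linarith
    _ = S.h (k + 1 : ℕ) * (S.y (k + 4) - S.y k) := by
      rw [S.y_add_four_of_tmem_of_not_tmem h₁ h₂ h₃]
      linear_combination -((2 + a) * S.M (k + 1) - S.M k) * δ * S.h_mul_self (k + 1)

end ADM

theorem stmt4_general {δ a Mbar M₀ y₀ : ℝ} {x : ℝ → ℝ} (hδ : 0 ≤ δ) (ha : 0 < a)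
    (S : ADM δ a Mbar M₀ y₀ x) {s : ℕ} (hs : Tmem S.h s)
    (hx : |x ((s + 3 : ℕ) * δ) - x ((s - 1 : ℕ) * δ)| ≤ 2 * Mbar * δ) :
    Tmem S.h (s + 1) ∨ Tmem S.h (s + 2) ∨ Tmem S.h (s + 3) := by
  obtain ⟨k, rfl⟩ : ∃ k, s = k + 1 := Nat.exists_eq_add_of_le' hs.1
  by_contra! ⟨h₂, h₃, h₄⟩
  refine h₄ (S.tmem_succ_of_h_mul_y_sub_nonneg ?_)
  have hsign : S.h (k + 3 : ℕ) = S.h (k + 1 : ℕ) :=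
    (S.h_succ_of_not_tmem h₃).trans (S.h_succ_of_not_tmem h₂)
  have hstart : 0 ≤ S.h (k + 1 : ℕ) * (S.y k - x (k * δ)) := by
    rw [(S.tmem_succ_iff k).1 hs, neg_mul, neg_nonneg]
    exact S.h_mul_y_sub_nonpos k
  have hestimate := S.two_mul_Mbar_mul_le_h_mul_y_sub hδ ha hs h₂ h₃
  have hsignal : S.h (k + 1 : ℕ) * (x ((k + 4 : ℕ) * δ) - x (k * δ)) ≤ 2 * Mbar * δ :=
    calc
      _ ≤ |S.h (k + 1 : ℕ) * (x ((k + 4 : ℕ) * δ) - x (k * δ))| := le_abs_self _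
      _ = |x ((k + 4 : ℕ) * δ) - x (k * δ)| := by rw [abs_mul, S.abs_h, one_mul]
      _ ≤ 2 * Mbar * δ := hx
  calc
    0 ≤ S.h (k + 1 : ℕ) * (S.y k - x (k * δ)) + S.h (k + 1 : ℕ) * (S.y (k + 4) - S.y k)
          - S.h (k + 1 : ℕ) * (x ((k + 4 : ℕ) * δ) - x (k * δ)) := by linarith
    _ = S.h (k + 3 : ℕ) * (S.y (k + 4) - x ((k + 4 : ℕ) * δ)) := by rw [hsign]; ring

/-- if `M̄ ≥ 2D`, `s ∈ T`, and condition (D) holds at every index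
`k ∈ {s−1, s, s+1, s+2, s+3}`, then `τ(s) = inf{m > s : m ∈ T} ≤ s + 3`; i.e.,
at least one of `s+1, s+2, s+3` belongs to `T`. -/
theorem stmt4 (δ a Mbar M₀ y₀ D : ℝ) (x : ℝ → ℝ)
    (hδ : 0 < δ) (ha : 1 < a) (ha2 : a ≤ 2) (hMbar : 0 < Mbar) (hM₀ : 0 < M₀)
    (hD : 0 < D) (hMD : 2 * D ≤ Mbar)
    (S : ADM δ a Mbar M₀ y₀ x)
    (s : ℕ) (hs : Tmem S.h s)
    (hDcond : ∀ k : ℕ, s - 1 ≤ k → k ≤ s + 3 → condD δ D x k) :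
    Tmem S.h (s + 1) ∨ Tmem S.h (s + 2) ∨ Tmem S.h (s + 3) := by
  have hsteps : s + 3 - (s - 1) = 4 := by have hs_pos := hs.1; omega
  have hx := condD.abs_sub_le hδ.le (by omega) fun k hk hk' => hDcond k hk (Nat.le_of_lt hk')
  rw [hsteps, Nat.cast_ofNat] at hx
  refine stmt4_general hδ.le (by linarith) S hs (hx.trans ?_)
  linarith [mul_le_mul_of_nonneg_right hMD hδ.le]
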